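/- arXiv:2504.16299 — 4 statements merged into one kernel-verified Lean document; each statement's English description precedes it below -/
import Mathlib

section
/- (Generic one-sample test, type II error.) Let E be a normed additive commutative group, let ρ, σ ∈ E, let m ≥ 1, and let σ̂_m be a random element of E defined on a probability space (Ω, ℙ). Suppose there are constants C > 0 and g(m) > 0 such that ℙ(‖σ̂_m − σ‖ ≥ t) ≤ g(m)·exp(−m·C·t²) for all t > 0. Let c_m > 0 satisfy c_m < ‖ρ − σ‖. Then ℙ(‖σ̂_m − ρ‖ ≤ c_m) ≤ g(m)·exp(−C·m·(‖ρ − σ‖ − c_m)²). -/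
open MeasureTheory ProbabilityTheory

theorem closedBall_subset_setOf_sub_le_dist {E : Type*} [PseudoMetricSpace E] (x y : E) (r : ℝ) :
    Metric.closedBall x r ⊆ {z | dist x y - r ≤ dist z y} := by
  intro z hz
  have triangle : dist x y ≤ dist z x + dist z y := dist_triangle_left x y z
  have hzr : dist z x ≤ r := Metric.mem_closedBall.mp hz
  rw [Set.mem_ofPred_eq]
  linarith

theorem generic_one_sample_typeII_general
    {E : Type*} [PseudoMetricSpace E] {Ω : Type*} [MeasurableSpace Ω] (μ : Measure Ω)
    (ρ σ : E) (σhat : Ω → E) (tail : ℝ → ENNReal)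
    (hconc : ∀ t > 0, μ {ω | t ≤ dist (σhat ω) σ} ≤ tail t)
    (c : ℝ) (hc : c < dist ρ σ) :
    μ {ω | dist (σhat ω) ρ ≤ c} ≤ tail (dist ρ σ - c) :=
  calc μ {ω | dist (σhat ω) ρ ≤ c}
      ≤ μ {ω | dist ρ σ - c ≤ dist (σhat ω) σ} :=
        measure_mono (Set.preimage_mono (closedBall_subset_setOf_sub_le_dist ρ σ c))
    _ ≤ tail (dist ρ σ - c) := hconc _ (sub_pos.mpr hc)

/-- Generic one-sample test, type II error: under a sub-Gaussian concentration bound for the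
estimator `σ̂` around the true state `σ`, the probability of accepting `H₀` (i.e. that `σ̂` lies
within `c` of the nominal `ρ`) is at most `g·exp(−C·m·(‖ρ−σ‖−c)²)`. -/
theorem generic_one_sample_typeII
    {E : Type*} [NormedAddCommGroup E] [MeasurableSpace E] [BorelSpace E]
    {Ω : Type*} [MeasurableSpace Ω] (μ : Measure Ω) [IsProbabilityMeasure μ]
    (ρ σ : E) (m : ℕ) (hm : 1 ≤ m)
    (σhat : Ω → E) (hmeas : Measurable σhat)
    (C g : ℝ) (hC : 0 < C) (hg : 0 < g)
    (hconc : ∀ t > (0 : ℝ),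
      μ {ω | ‖σhat ω - σ‖ ≥ t} ≤ ENNReal.ofReal (g * Real.exp (-(m : ℝ) * C * t ^ 2)))
    (c : ℝ) (hcpos : 0 < c) (hc : c < ‖ρ - σ‖) :
    μ {ω | ‖σhat ω - ρ‖ ≤ c} ≤
      ENNReal.ofReal (g * Real.exp (-C * (m : ℝ) * (‖ρ - σ‖ - c) ^ 2)) := by
  rw [show -C * (m : ℝ) = -(m : ℝ) * C by ring]
  simp only [← dist_eq_norm] at hconc hc ⊢
  exact generic_one_sample_typeII_general μ ρ σ σhat _ hconc c hc
end

section
/- (Generic two-sample test, type I error.) Let E be a normed additive commutative group, let σ ∈ E, let m, n ≥ 1 and k = min{m, n}, and let σ̂_m and ρ̂_n be random elements of E on a common probability space (Ω, ℙ). Suppose there are constants C > 0 and g(m), g(n) > 0 such that ℙ(‖σ̂_m − σ‖ ≥ t) ≤ g(m)·exp(−m·C·t²) and ℙ(‖ρ̂_n − σ‖ ≥ t) ≤ g(n)·exp(−n·C·t²) for all t > 0. Then for every c > 0, ℙ(‖σ̂_m − ρ̂_n‖ > c) ≤ (g(m) + g(n))·exp(−k·C·c²/4). In particular, for α ∈ (0,1)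 with g(m)+g(n) ≥ α, taking c_k = √(4·ln((g(n)+g(m))/α)/(C·k)) gives ℙ(‖σ̂_m − ρ̂_n‖ > c_k) ≤ α. -/
open MeasureTheory ProbabilityTheory

/-! The triangle inequality and a union bound at `t / 2` turn two Gaussian tails around a common
point into a Gaussian tail of the mutual distance, at a quarter of the smaller rate. Solving
`A * exp (-a * s ^ 2) = α` for `s` gives the critical value. -/

/-- `X` has a Gaussian upper tail with prefactor `A` and rate `a`. Levels `t ≤ 0` are
unconstrained, so `A` may be smaller than the total mass of `μ`. -/
def HasGaussianTail {Ω : Type*} [MeasurableSpace Ω] (μ : Measure Ω) (X : Ω → ℝ) (A a : ℝ) : Prop :=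
  ∀ t > (0 : ℝ), μ {ω | X ω ≥ t} ≤ ENNReal.ofReal (A * Real.exp (-a * t ^ 2))

section

variable {Ω : Type*} [MeasurableSpace Ω] {μ : Measure Ω}

theorem measure_lt_le_of_forall_gt {β : Type*} [LinearOrder β] [TopologicalSpace β]
    [OrderTopology β] [DenselyOrdered β] [NoMaxOrder β] [FirstCountableTopology β]
    {X : Ω → β} {s : β} {M : ENNReal} (h : ∀ t > s, μ {ω | t ≤ X ω} ≤ M) :
    μ {ω | s < X ω} ≤ M := by
  obtain ⟨u, hu_anti, hu_gt, hu_lim⟩ := exists_seq_strictAnti_tendsto s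
  have h_union : {ω | s < X ω} = ⋃ j, {ω | u j ≤ X ω} := by
    ext ω
    simp only [Set.mem_iUnion, Set.mem_ofPred_eq]
    exact ⟨fun hω ↦ (hu_lim.eventually_le_const hω).exists, fun ⟨j, hj⟩ ↦ (hu_gt j).trans_le hj⟩
  have h_mono : Monotone fun j ↦ {ω | u j ≤ X ω} :=
    fun _ _ hij _ hω ↦ (hu_anti.antitone hij).trans hω
  rw [h_union, h_mono.measure_iUnion]
  exact iSup_le fun j ↦ h (u j) (hu_gt j)

namespace HasGaussianTail

variable {X Y : Ω → ℝ} {A B a b : ℝ}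

theorem mono (hY : HasGaussianTail μ Y A a) (hXY : X ≤ Y) : HasGaussianTail μ X A a :=
  fun t ht ↦ (measure_mono fun ω hω ↦ le_trans hω (hXY ω)).trans (hY t ht)

theorem mono_rate (hX : HasGaussianTail μ X A a) (hA : 0 ≤ A) (hba : b ≤ a) :
    HasGaussianTail μ X A b := by
  intro t ht
  refine (hX t ht).trans (ENNReal.ofReal_le_ofReal ?_)
  gcongr

theorem add_of_same_rate (hX : HasGaussianTail μ X A a) (hY : HasGaussianTail μ Y B a)
    (hA : 0 ≤ A) (hB : 0 ≤ B) : HasGaussianTail μ (X + Y) (A + B) (a / 4) := by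
  intro t ht
  have h_subset : {ω | (X + Y) ω ≥ t} ⊆ {ω | X ω ≥ t / 2} ∪ {ω | Y ω ≥ t / 2} := by
    intro ω (hω : t ≤ X ω + Y ω)
    exact le_or_le_of_add_le_add ((add_halves t).trans_le hω)
  calc μ {ω | (X + Y) ω ≥ t}
      ≤ μ {ω | X ω ≥ t / 2} + μ {ω | Y ω ≥ t / 2} :=
        (measure_mono h_subset).trans (measure_union_le _ _)
    _ ≤ ENNReal.ofReal (A * Real.exp (-a * (t / 2) ^ 2)) +
          ENNReal.ofReal (B * Real.exp (-a * (t / 2) ^ 2)) :=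
        add_le_add (hX _ (half_pos ht)) (hY _ (half_pos ht))
    _ = ENNReal.ofReal ((A + B) * Real.exp (-(a / 4) * t ^ 2)) := by
        rw [← ENNReal.ofReal_add (by positivity) (by positivity)]
        ring_nf

theorem add (hX : HasGaussianTail μ X A a) (hY : HasGaussianTail μ Y B b)
    (hA : 0 ≤ A) (hB : 0 ≤ B) : HasGaussianTail μ (X + Y) (A + B) (min a b / 4) :=
  (hX.mono_rate hA (min_le_left a b)).add_of_same_rate (hY.mono_rate hB (min_le_right a b)) hA hB

theorem dist_of_dist {E : Type*} [PseudoMetricSpace E] {U V : Ω → E} {x : E}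
    (hU : HasGaussianTail μ (fun ω ↦ dist (U ω) x) A a)
    (hV : HasGaussianTail μ (fun ω ↦ dist (V ω) x) B b) (hA : 0 ≤ A) (hB : 0 ≤ B) :
    HasGaussianTail μ (fun ω ↦ dist (U ω) (V ω)) (A + B) (min a b / 4) :=
  (hU.add hV hA hB).mono fun ω ↦ dist_triangle_right (U ω) (V ω) x

theorem measure_gt_le (hX : HasGaussianTail μ X A a) (hA : 0 ≤ A) (ha : 0 ≤ a) {s : ℝ}
    (hs : 0 ≤ s) : μ {ω | X ω > s} ≤ ENNReal.ofReal (A * Real.exp (-a * s ^ 2)) := by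
  -- `s` may be `0`, a level without a tail bound, so it is approached from above.
  refine measure_lt_le_of_forall_gt fun t hst ↦
    (hX t (hs.trans_lt hst)).trans (ENNReal.ofReal_le_ofReal ?_)
  simp only [neg_mul]
  gcongr

theorem measure_gt_sqrt_log_le (hX : HasGaussianTail μ X A a) (ha : 0 < a) {α : ℝ}
    (hα : 0 < α) (hαA : α ≤ A) :
    μ {ω | X ω > √(Real.log (A / α) / a)} ≤ ENNReal.ofReal α := by
  have hA : 0 < A := hα.trans_le hαA
  have h_log : 0 ≤ Real.log (A / α) := Real.log_nonneg ((one_le_div hα).2 hαA)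
  have h_level : A * Real.exp (-a * √(Real.log (A / α) / a) ^ 2) = α := by
    rw [Real.sq_sqrt (by positivity), neg_mul, mul_div_cancel₀ _ ha.ne', Real.exp_neg,
      Real.exp_log (by positivity), inv_div, mul_div_cancel₀ _ hA.ne']
  exact (hX.measure_gt_le hA.le ha.le (Real.sqrt_nonneg _)).trans_eq (by rw [h_level])

end HasGaussianTail

end

theorem generic_two_sample_typeI_general
    {E : Type*} [PseudoMetricSpace E] {Ω : Type*} [MeasurableSpace Ω] (μ : Measure Ω)
    (σ : E) (m n : ℝ) (hm : 0 < m) (hn : 0 < n) (σhat ρhat : Ω → E)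
    (C gm gn : ℝ) (hC : 0 < C) (hgm : 0 ≤ gm) (hgn : 0 ≤ gn)
    (hconc₁ : ∀ t > (0 : ℝ),
      μ {ω | dist (σhat ω) σ ≥ t} ≤ ENNReal.ofReal (gm * Real.exp (-m * C * t ^ 2)))
    (hconc₂ : ∀ t > (0 : ℝ),
      μ {ω | dist (ρhat ω) σ ≥ t} ≤ ENNReal.ofReal (gn * Real.exp (-n * C * t ^ 2))) :
    (∀ c > (0 : ℝ), μ {ω | dist (σhat ω) (ρhat ω) ≥ c} ≤
        ENNReal.ofReal ((gm + gn) * Real.exp (-min m n * C * c ^ 2 / 4))) ∧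
    ∀ α > (0 : ℝ), α ≤ gm + gn →
      μ {ω | dist (σhat ω) (ρhat ω) > √(4 * Real.log ((gn + gm) / α) / (C * min m n))} ≤
        ENNReal.ofReal α := by
  have hσ : HasGaussianTail μ (fun ω ↦ dist (σhat ω) σ) gm (m * C) := by
    simpa only [HasGaussianTail, neg_mul] using hconc₁
  have hρ : HasGaussianTail μ (fun ω ↦ dist (ρhat ω) σ) gn (n * C) := by
    simpa only [HasGaussianTail, neg_mul] using hconc₂
  have h_dist : HasGaussianTail μ (fun ω ↦ dist (σhat ω) (ρhat ω)) (gm + gn)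
      (min m n * C / 4) := by
    simpa only [min_mul_of_nonneg _ _ hC.le] using hσ.dist_of_dist hρ hgm hgn
  refine ⟨fun c hc ↦ ?_, fun α hα hαg ↦ ?_⟩
  · convert h_dist c hc using 4
    ring
  · have h_rate : 0 < min m n * C / 4 := by positivity
    convert h_dist.measure_gt_sqrt_log_le h_rate hα hαg using 6
    rw [add_comm gn gm]
    field_simp

/-- Generic two-sample test, type I error: if both estimators concentrate around the common
state `σ`, then `ℙ(‖σ̂_m − ρ̂_n‖ > c) ≤ (g_m+g_n)·exp(−k·C·c²/4)` for every `c > 0`, and the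
threshold `c_k = √(4·ln((g_n+g_m)/α)/(C·k))` controls the type I error at level `α`. -/
theorem generic_two_sample_typeI
    {E : Type*} [NormedAddCommGroup E] [MeasurableSpace E] [BorelSpace E]
    {Ω : Type*} [MeasurableSpace Ω] (μ : Measure Ω) [IsProbabilityMeasure μ]
    (σ : E) (m n : ℕ) (hm : 1 ≤ m) (hn : 1 ≤ n) (k : ℕ) (hk : k = min m n)
    (σhat ρhat : Ω → E) (hmeas₁ : Measurable σhat) (hmeas₂ : Measurable ρhat)
    (C gm gn : ℝ) (hC : 0 < C) (hgm : 0 < gm) (hgn : 0 < gn)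
    (hconc₁ : ∀ t > (0 : ℝ),
      μ {ω | ‖σhat ω - σ‖ ≥ t} ≤ ENNReal.ofReal (gm * Real.exp (-(m : ℝ) * C * t ^ 2)))
    (hconc₂ : ∀ t > (0 : ℝ),
      μ {ω | ‖ρhat ω - σ‖ ≥ t} ≤ ENNReal.ofReal (gn * Real.exp (-(n : ℝ) * C * t ^ 2))) :
    (∀ c > (0 : ℝ), μ {ω | ‖σhat ω - ρhat ω‖ > c} ≤
        ENNReal.ofReal ((gm + gn) * Real.exp (-(k : ℝ) * C * c ^ 2 / 4))) ∧
    ∀ α : ℝ, α ∈ Set.Ioo (0 : ℝ) 1 → α ≤ gm + gn →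
      μ {ω | ‖σhat ω - ρhat ω‖ > Real.sqrt (4 * Real.log ((gn + gm) / α) / (C * k))} ≤
        ENNReal.ofReal α := by
  have h := generic_two_sample_typeI_general μ σ m n (by exact_mod_cast hm) (by exact_mod_cast hn)
    σhat ρhat C gm gn hC hgm.le hgn.le (by simpa only [dist_eq_norm]) (by simpa only [dist_eq_norm])
  simp only [dist_eq_norm, ← Nat.cast_min, ← hk] at h
  exact ⟨fun c hc ↦ le_trans (measure_mono fun _ (hω : c < _) ↦ hω.le) (h.1 c hc),
    fun α hα ↦ h.2 α hα.1⟩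
end

section
/- (Generic two-sample test, type II error.) Let E be a normed additive commutative group, let ρ, σ ∈ E with ρ ≠ σ, let m, n ≥ 1 and k = min{m, n}, and let σ̂_m and ρ̂_n be random elements of E on a common probability space (Ω, ℙ). Suppose there are constants C > 0 and g(m), g(n) > 0 such that ℙ(‖σ̂_m − σ‖ ≥ t) ≤ g(m)·exp(−m·C·t²) and ℙ(‖ρ̂_n − ρ‖ ≥ t) ≤ g(n)·exp(−n·C·t²) for all t > 0. Let c > 0 satisfy c < ‖ρ − σ‖. Then ℙ(‖ρ̂_n − σ̂_m‖ ≤ c) ≤ (g(n) + g(m))·exp(−k·C·(‖ρ − σ‖ − c)²/4). -/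
open MeasureTheory ProbabilityTheory

theorem setOf_dist_le_subset_union {Ω E : Type*} [PseudoMetricSpace E] {f g : Ω → E} {x y : E}
    {r s c : ℝ} (h : r + c + s ≤ dist x y) :
    {ω | dist (f ω) (g ω) ≤ c} ⊆ {ω | r ≤ dist (f ω) x} ∪ {ω | s ≤ dist (g ω) y} := by
  intro ω (hfg : dist (f ω) (g ω) ≤ c)
  by_contra hnear
  obtain ⟨hf, hg⟩ : dist (f ω) x < r ∧ dist (g ω) y < s := by
    simpa only [Set.mem_union, Set.mem_ofPred_eq, not_or, not_le] using hnear
  have htri : dist x y ≤ dist (f ω) x + dist (f ω) (g ω) + dist (g ω) y := by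
    simpa only [dist_comm x (f ω)] using dist_triangle4 x (f ω) (g ω) y
  linarith

theorem measure_dist_le_le_add {Ω E : Type*} [MeasurableSpace Ω] [PseudoMetricSpace E]
    (μ : Measure Ω) {f g : Ω → E} {x y : E} {r s c : ℝ} (h : r + c + s ≤ dist x y) :
    μ {ω | dist (f ω) (g ω) ≤ c} ≤ μ {ω | r ≤ dist (f ω) x} + μ {ω | s ≤ dist (g ω) y} :=
  (measure_mono (setOf_dist_le_subset_union h)).trans (measure_union_le _ _)

theorem generic_two_sample_typeII_general {Ω E : Type*} [MeasurableSpace Ω] [PseudoMetricSpace E]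
    (μ : Measure Ω) {ρ σ : E} {σhat ρhat : Ω → E} {m n C gm gn c : ℝ}
    (hC : 0 ≤ C) (hgm : 0 ≤ gm) (hgn : 0 ≤ gn)
    (hσhat : ∀ t > (0 : ℝ),
      μ {ω | t ≤ dist (σhat ω) σ} ≤ ENNReal.ofReal (gm * Real.exp (-m * C * t ^ 2)))
    (hρhat : ∀ t > (0 : ℝ),
      μ {ω | t ≤ dist (ρhat ω) ρ} ≤ ENNReal.ofReal (gn * Real.exp (-n * C * t ^ 2)))
    (hc : c < dist ρ σ) :
    μ {ω | dist (ρhat ω) (σhat ω) ≤ c} ≤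
      ENNReal.ofReal ((gn + gm) * Real.exp (-min m n * C * (dist ρ σ - c) ^ 2 / 4)) := by
  -- Each estimator is allowed half of the gap, whose square is the source of the factor `1 / 4`.
  set t : ℝ := (dist ρ σ - c) / 2 with ht
  have ht_pos : 0 < t := half_pos (sub_pos.mpr hc)
  have hexponent : -min m n * C * (dist ρ σ - c) ^ 2 / 4 = -min m n * C * t ^ 2 := by
    rw [ht]; ring
  calc μ {ω | dist (ρhat ω) (σhat ω) ≤ c}
      ≤ μ {ω | t ≤ dist (ρhat ω) ρ} + μ {ω | t ≤ dist (σhat ω) σ} :=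
        measure_dist_le_le_add μ (by linarith)
    _ ≤ ENNReal.ofReal (gn * Real.exp (-n * C * t ^ 2)) +
          ENNReal.ofReal (gm * Real.exp (-m * C * t ^ 2)) :=
        add_le_add (hρhat t ht_pos) (hσhat t ht_pos)
    _ ≤ ENNReal.ofReal (gn * Real.exp (-min m n * C * t ^ 2)) +
          ENNReal.ofReal (gm * Real.exp (-min m n * C * t ^ 2)) := by
        gcongr
        · exact min_le_right m n
        · exact min_le_left m n
    _ = ENNReal.ofReal ((gn + gm) * Real.exp (-min m n * C * (dist ρ σ - c) ^ 2 / 4)) := by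
        rw [hexponent, add_mul, ENNReal.ofReal_add (by positivity) (by positivity)]

/-- Generic two-sample test, type II error: if `σ̂_m` concentrates around `σ` and `ρ̂_n` around
`ρ ≠ σ`, then for any threshold `c < ‖ρ−σ‖`,
`ℙ(‖ρ̂_n − σ̂_m‖ ≤ c) ≤ (g_n+g_m)·exp(−k·C·(‖ρ−σ‖−c)²/4)`. -/
theorem generic_two_sample_typeII
    {E : Type*} [NormedAddCommGroup E] [MeasurableSpace E] [BorelSpace E]
    {Ω : Type*} [MeasurableSpace Ω] (μ : Measure Ω) [IsProbabilityMeasure μ]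
    (ρ σ : E) (hρσ : ρ ≠ σ)
    (m n : ℕ) (hm : 1 ≤ m) (hn : 1 ≤ n) (k : ℕ) (hk : k = min m n)
    (σhat ρhat : Ω → E) (hmeas₁ : Measurable σhat) (hmeas₂ : Measurable ρhat)
    (C gm gn : ℝ) (hC : 0 < C) (hgm : 0 < gm) (hgn : 0 < gn)
    (hconc₁ : ∀ t > (0 : ℝ),
      μ {ω | ‖σhat ω - σ‖ ≥ t} ≤ ENNReal.ofReal (gm * Real.exp (-(m : ℝ) * C * t ^ 2)))
    (hconc₂ : ∀ t > (0 : ℝ),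
      μ {ω | ‖ρhat ω - ρ‖ ≥ t} ≤ ENNReal.ofReal (gn * Real.exp (-(n : ℝ) * C * t ^ 2)))
    (c : ℝ) (hcpos : 0 < c) (hc : c < ‖ρ - σ‖) :
    μ {ω | ‖ρhat ω - σhat ω‖ ≤ c} ≤
      ENNReal.ofReal ((gn + gm) * Real.exp (-(k : ℝ) * C * (‖ρ - σ‖ - c) ^ 2 / 4)) := by
  simp only [← dist_eq_norm, ge_iff_le, hk, Nat.cast_min] at hconc₁ hconc₂ hc ⊢
  exact generic_two_sample_typeII_general μ hC.le hgm.le hgn.le hconc₁ hconc₂ hc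
end

section
/- (Sharpness of Pinsker's inequality.) For every ε > 0 there exist distinct probability distributions P and Q on the two-element alphabet {0,1} such that (1/2)·‖P − Q‖₁² ≤ D(P‖Q) ≤ (1/2 + ε)·‖P − Q‖₁², i.e., the ratio D(P‖Q)/‖P − Q‖₁² lies in the interval [1/2, 1/2 + ε]. -/
/-!
Compare the fair coin with a coin of bias `t > 0`, at `ℓ¹` distance `t` from it. The divergence
is `-log (1 - t ^ 2) / 2`, and `x ≤ -log (1 - x) ≤ x / (1 - x)` at `x = t ^ 2` places the ratio of
the divergence to the squared distance between `1 / 2` and `1 / (2 * (1 - t ^ 2))`, which tends to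
`1 / 2` as `t` tends to `0`.
-/

section FiniteAlphabet

variable {α : Type*} [Fintype α]

/-- The Kullback–Leibler divergence `D(P‖Q)`, in nats, of real-valued mass functions on a finite
alphabet. The junk value `log (p / 0) = 0` makes it meaningful only if `P` vanishes wherever `Q`
does. -/
noncomputable def klDivergence (P Q : α → ℝ) : ℝ :=
  ∑ x, P x * Real.log (P x / Q x)

/-- The total variation distance `‖P - Q‖₁`, in the normalization without the factor `1 / 2`. -/
def l1Distance (P Q : α → ℝ) : ℝ :=
  ∑ x, |P x - Q x|

end FiniteAlphabet

/-- The distribution of a coin whose two outcomes have probabilities differing by `t`; a probability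
distribution when `|t| ≤ 1`, and the fair coin when `t = 0`. -/
noncomputable def biasedCoin (t : ℝ) : Bool → ℝ
  | true => (1 + t) / 2
  | false => (1 - t) / 2

theorem biasedCoin_pos {t : ℝ} (ht : |t| < 1) (x : Bool) : 0 < biasedCoin t x := by
  obtain ⟨neg_one_lt, lt_one⟩ := abs_lt.mp ht
  cases x <;> simp only [biasedCoin] <;> linarith

theorem sum_biasedCoin (t : ℝ) : ∑ x, biasedCoin t x = 1 := by
  simp only [Fintype.sum_bool, biasedCoin]
  ring

theorem biasedCoin_injective : Function.Injective biasedCoin := by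
  intro s t hst
  have eq_at_true : (1 + s) / 2 = (1 + t) / 2 := congrFun hst true
  linarith

theorem l1Distance_biasedCoin (s t : ℝ) :
    l1Distance (biasedCoin s) (biasedCoin t) = |s - t| := by
  have sub_true : (1 + s) / 2 - (1 + t) / 2 = (s - t) / 2 := by ring
  have sub_false : (1 - s) / 2 - (1 - t) / 2 = -((s - t) / 2) := by ring
  simp only [l1Distance, Fintype.sum_bool, biasedCoin, sub_true, sub_false, abs_neg, abs_div,
    abs_two, add_halves]

theorem klDivergence_biasedCoin_zero {t : ℝ} (ht : |t| < 1) :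
    klDivergence (biasedCoin 0) (biasedCoin t) = -Real.log (1 - t ^ 2) / 2 := by
  obtain ⟨neg_one_lt, lt_one⟩ := abs_lt.mp ht
  have one_add_ne : 1 + t ≠ 0 := by linarith
  have one_sub_ne : 1 - t ≠ 0 := by linarith
  have ratio_true : (1 + 0) / 2 / ((1 + t) / 2) = (1 + t)⁻¹ := by field_simp; ring
  have ratio_false : (1 - 0) / 2 / ((1 - t) / 2) = (1 - t)⁻¹ := by field_simp; ring
  have factor : 1 - t ^ 2 = (1 + t) * (1 - t) := by ring
  simp only [klDivergence, Fintype.sum_bool, biasedCoin, ratio_true, ratio_false, Real.log_inv]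
  rw [factor, Real.log_mul one_add_ne one_sub_ne]
  ring

theorem le_neg_log_one_sub {x : ℝ} (hx : x < 1) : x ≤ -Real.log (1 - x) := by
  linarith [Real.log_le_sub_one_of_pos (sub_pos.mpr hx)]

theorem neg_log_one_sub_le_div {x : ℝ} (hx : x < 1) : -Real.log (1 - x) ≤ x / (1 - x) := by
  have one_sub_pos : 0 < 1 - x := sub_pos.mpr hx
  calc -Real.log (1 - x) ≤ (1 - x)⁻¹ - 1 := by
        linarith [Real.one_sub_inv_le_log_of_pos one_sub_pos]
    _ = x / (1 - x) := by field_simp; ring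

theorem half_mul_sq_l1Distance_le_klDivergence_biasedCoin_zero {t : ℝ} (ht : |t| < 1) :
    1 / 2 * l1Distance (biasedCoin 0) (biasedCoin t) ^ 2 ≤
      klDivergence (biasedCoin 0) (biasedCoin t) := by
  rw [l1Distance_biasedCoin, klDivergence_biasedCoin_zero ht, zero_sub, abs_neg, sq_abs]
  linarith [le_neg_log_one_sub ((sq_lt_one_iff_abs_lt_one t).mpr ht)]

theorem klDivergence_biasedCoin_zero_le_mul_sq_l1Distance {t : ℝ} (ht : |t| < 1) :
    klDivergence (biasedCoin 0) (biasedCoin t) ≤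
      1 / (2 * (1 - t ^ 2)) * l1Distance (biasedCoin 0) (biasedCoin t) ^ 2 := by
  rw [l1Distance_biasedCoin, klDivergence_biasedCoin_zero ht, zero_sub, abs_neg, sq_abs]
  calc -Real.log (1 - t ^ 2) / 2 ≤ t ^ 2 / (1 - t ^ 2) / 2 := by
        gcongr
        exact neg_log_one_sub_le_div ((sq_lt_one_iff_abs_lt_one t).mpr ht)
    _ = 1 / (2 * (1 - t ^ 2)) * t ^ 2 := by field_simp

theorem exists_one_div_two_mul_one_sub_sq_le {ε : ℝ} (hε : 0 < ε) :
    ∃ t : ℝ, 0 < t ∧ t < 1 ∧ 1 / (2 * (1 - t ^ 2)) ≤ 1 / 2 + ε := by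
  -- `t` solves `1 / (2 * (1 - t)) = 1 / 2 + ε`, and `t ^ 2 ≤ t`.
  obtain ⟨t, ht⟩ : ∃ t : ℝ, t = 2 * ε / (1 + 2 * ε) := ⟨_, rfl⟩
  have t_pos : 0 < t := by rw [ht]; positivity
  have t_lt_one : t < 1 := by rw [ht, div_lt_one (by positivity)]; linarith
  have : 0 < 1 - t := sub_pos.mpr t_lt_one
  refine ⟨t, t_pos, t_lt_one, ?_⟩
  calc 1 / (2 * (1 - t ^ 2)) ≤ 1 / (2 * (1 - t)) := by
        gcongr
        exact pow_le_of_le_one t_pos.le t_lt_one.le two_ne_zero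
    _ = 1 / 2 + ε := by
        have one_sub_eq : 1 - t = 1 / (1 + 2 * ε) := by rw [ht]; field_simp; ring
        rw [one_sub_eq]
        field_simp

/-- Sharpness of Pinsker's inequality: for every `ε > 0` there are distinct binary
distributions `P, Q` with `(1/2)·‖P − Q‖₁² ≤ D(P‖Q) ≤ (1/2 + ε)·‖P − Q‖₁²`. -/
theorem pinsker_sharp :
    ∀ ε > (0 : ℝ), ∃ P Q : Bool → ℝ,
      (∀ x, 0 ≤ P x) ∧ (∑ x, P x) = 1 ∧
      (∀ x, 0 < Q x) ∧ (∑ x, Q x) = 1 ∧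
      P ≠ Q ∧
      (1 / 2) * (∑ x, |P x - Q x|) ^ 2 ≤ ∑ x, P x * Real.log (P x / Q x) ∧
      (∑ x, P x * Real.log (P x / Q x)) ≤ (1 / 2 + ε) * (∑ x, |P x - Q x|) ^ 2 := by
  intro ε hε
  obtain ⟨t, t_pos, t_lt_one, ht⟩ := exists_one_div_two_mul_one_sub_sq_le hε
  have abs_t_lt_one : |t| < 1 := by rwa [abs_of_pos t_pos]
  have upper_bound : klDivergence (biasedCoin 0) (biasedCoin t) ≤
      (1 / 2 + ε) * l1Distance (biasedCoin 0) (biasedCoin t) ^ 2 :=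
    (klDivergence_biasedCoin_zero_le_mul_sq_l1Distance abs_t_lt_one).trans (by gcongr)
  exact ⟨biasedCoin 0, biasedCoin t,
    fun x => (biasedCoin_pos (by simp) x).le, sum_biasedCoin 0,
    biasedCoin_pos abs_t_lt_one, sum_biasedCoin t,
    biasedCoin_injective.ne t_pos.ne,
    half_mul_sq_l1Distance_le_klDivergence_biasedCoin_zero abs_t_lt_one, upper_bound⟩
end
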